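/- Let 0 ≤ s < m and 0 ≤ r < n be integers, and let S be a uniformly random n-element subset of {1,…,m+n}. For integers i, k with m−s ≤ i ≤ m and n−r ≤ k ≤ n, the probability that A_s(S) = k and B_r(S) = i equals C(m+n−r−i−1, n−r−1) · C(m+n−s−k−1, m−s−1) · C(k+i−m−n+s+r, k−n+r) / C(m+n, n), where C(a, b) denotes the binomial coefficient. -/

import Mathlib

open Finset

/-- The `j`-th smallest element (1-indexed) of a finite set of naturals. -/
def nthSmallest (T : Finset ℕ) (j : ℕ) : ℕ :=
  (T.sort (· ≤ ·)).getD (j - 1) 0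

/-- Exceedance statistic: for an `n`-element subset `S` of `{1,…,m+n}` (the ranks of the
`Y`-sample), the number of elements of `S` greater than `X_{(m-s)}`, the `(m-s)`-th smallest
element of the complement of `S`. -/
def Aexc (m n s : ℕ) (S : Finset ℕ) : ℕ :=
  (S.filter fun y => nthSmallest (Finset.Icc 1 (m + n) \ S) (m - s) < y).card

/-- Precedence statistic: the number of elements of the complement of `S` smaller than
`Y_{(r+1)}`, the `(r+1)`-th smallest element of `S`. -/
def Bprec (m n r : ℕ) (S : Finset ℕ) : ℕ :=
  ((Finset.Icc 1 (m + n) \ S).filter fun x => x < nthSmallest S (r + 1)).card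

/-- Defining property of the `j`-th smallest element. -/
theorem nthSmallest_spec (T : Finset ℕ) (j : ℕ) (h1 : 1 ≤ j) (h2 : j ≤ T.card) :
    nthSmallest T j ∈ T ∧ (T.filter (· < nthSmallest T j)).card = j - 1 := by
  have hlt : j - 1 < T.card := by omega
  have e : nthSmallest T j = T.orderEmbOfFin rfl ⟨j - 1, hlt⟩ := by
    rw [Finset.orderEmbOfFin_apply, nthSmallest,
      List.getD_eq_getElem _ _ (by rw [Finset.length_sort]; exact hlt)]
    rfl
  rw [e]
  refine ⟨Finset.orderEmbOfFin_mem _ _ _, ?_⟩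
  have : T.filter (· < T.orderEmbOfFin rfl ⟨j - 1, hlt⟩)
      = (Finset.Iio (⟨j - 1, hlt⟩ : Fin T.card)).map (T.orderEmbOfFin rfl).toEmbedding := by
    ext x
    simp only [Finset.mem_filter, Finset.mem_map, Finset.mem_Iio]
    constructor
    · rintro ⟨hx, hlx⟩
      have hx' : x ∈ Set.range (T.orderEmbOfFin rfl) := by
        rw [Finset.range_orderEmbOfFin]; exact hx
      obtain ⟨a, rfl⟩ := hx'
      exact ⟨a, (T.orderEmbOfFin rfl).lt_iff_lt.1 hlx, rfl⟩
    · rintro ⟨a, ha, rfl⟩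
      exact ⟨Finset.orderEmbOfFin_mem _ _ _, (T.orderEmbOfFin rfl).lt_iff_lt.2 ha⟩
  rw [this, Finset.card_map, Fin.card_Iio]

theorem card_filter_lt_strict (T : Finset ℕ) (a b : ℕ) (ha : a ∈ T) (hab : a < b) :
    (T.filter (· < a)).card < (T.filter (· < b)).card := by
  apply Finset.card_lt_card
  rw [Finset.ssubset_iff_of_subset]
  · exact ⟨a, by simp [ha, hab], by simp⟩
  · intro x
    simp only [Finset.mem_filter]
    rintro ⟨h, h'⟩
    exact ⟨h, by omega⟩

theorem nthSmallest_eq (T : Finset ℕ) (j t : ℕ) (h1 : 1 ≤ j) (h2 : j ≤ T.card) (ht : t ∈ T)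
    (hc : (T.filter (· < t)).card = j - 1) : nthSmallest T j = t := by
  obtain ⟨hm, hcard⟩ := nthSmallest_spec T j h1 h2
  rcases lt_trichotomy (nthSmallest T j) t with h | h | h
  · have := card_filter_lt_strict T _ _ hm h
    omega
  · exact h
  · have := card_filter_lt_strict T _ _ ht h
    omega

theorem card_lt_split (N t : ℕ) (S : Finset ℕ) (hS : S ⊆ Finset.Icc 1 N) (h1 : 1 ≤ t)
    (h2 : t ≤ N) :
    (S.filter (· < t)).card + ((Finset.Icc 1 N \ S).filter (· < t)).card = t - 1 := by
  have hd : Disjoint (S.filter (· < t)) ((Finset.Icc 1 N \ S).filter (· < t)) := by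
    rw [Finset.disjoint_left]
    intro x hx hx'
    simp only [Finset.mem_filter, Finset.mem_sdiff] at hx hx'
    exact hx'.1.2 hx.1
  rw [← Finset.card_union_of_disjoint hd]
  have : S.filter (· < t) ∪ (Finset.Icc 1 N \ S).filter (· < t) = Finset.Icc 1 (t - 1) := by
    ext x
    have := @hS x
    simp only [Finset.mem_union, Finset.mem_filter, Finset.mem_sdiff, Finset.mem_Icc] at *
    by_cases hx : x ∈ S
    · have := this hx
      simp only [hx, true_and, not_true, and_false, false_and, or_false]
      omega
    · simp only [hx, false_and, not_false_eq_true, and_true, false_or]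
      omega
  rw [this]
  simp

theorem card_gt_split (t : ℕ) (S : Finset ℕ) (h : t ∉ S) :
    (S.filter (· < t)).card + (S.filter (t < ·)).card = S.card := by
  rw [← Finset.card_filter_add_card_filter_not (s := S) (· < t)]
  congr 2
  apply Finset.filter_congr
  intro x hx
  have : x ≠ t := fun e => h (e ▸ hx)
  omega

theorem card_compl (m n : ℕ) (S : Finset ℕ) (hS : S ⊆ Finset.Icc 1 (m + n)) (hc : S.card = n) :
    (Finset.Icc 1 (m + n) \ S).card = m := by
  rw [Finset.card_sdiff_of_subset hS, hc]
  simp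

theorem Aexc_iff (m n s k : ℕ) (S : Finset ℕ) (hS : S ⊆ Finset.Icc 1 (m + n)) (hc : S.card = n)
    (hs : s < m) (hk : k ≤ n) :
    Aexc m n s S = k ↔ (m - s + n - k) ∉ S ∧ (S.filter (· < m - s + n - k)).card = n - k := by
  have hcc := card_compl m n S hS hc
  unfold Aexc
  constructor
  · intro h
    obtain ⟨hm, hcard⟩ := nthSmallest_spec (Finset.Icc 1 (m + n) \ S) (m - s) (by omega) (by omega)
    generalize nthSmallest (Finset.Icc 1 (m + n) \ S) (m - s) = X at *
    rw [Finset.mem_sdiff, Finset.mem_Icc] at hm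
    have h1 := card_lt_split (m + n) X S hS hm.1.1 hm.1.2
    have h2 := card_gt_split X S hm.2
    have hX : X = m - s + n - k := by omega
    rw [← hX]
    exact ⟨hm.2, by omega⟩
  · rintro ⟨hp, hcard⟩
    have h1 := card_lt_split (m + n) (m - s + n - k) S hS (by omega) (by omega)
    have h2 := card_gt_split _ S hp
    have hX : nthSmallest (Finset.Icc 1 (m + n) \ S) (m - s) = m - s + n - k := by
      apply nthSmallest_eq _ _ _ (by omega) (by omega)
      · rw [Finset.mem_sdiff, Finset.mem_Icc]
        exact ⟨by omega, hp⟩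
      · omega
    rw [hX]
    omega

theorem Bprec_iff (m n r i : ℕ) (S : Finset ℕ) (hS : S ⊆ Finset.Icc 1 (m + n)) (hc : S.card = n)
    (hr : r < n) (hi : i ≤ m) :
    Bprec m n r S = i ↔ (r + 1 + i) ∈ S ∧ (S.filter (· < r + 1 + i)).card = r := by
  unfold Bprec
  constructor
  · intro h
    obtain ⟨hm, hcard⟩ := nthSmallest_spec S (r + 1) (by omega) (by omega)
    generalize nthSmallest S (r + 1) = Y at *
    have hY := Finset.mem_Icc.1 (hS hm)
    have h1 := card_lt_split (m + n) Y S hS hY.1 hY.2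
    have hX : Y = r + 1 + i := by omega
    rw [← hX]
    exact ⟨hm, by omega⟩
  · rintro ⟨hp, hcard⟩
    have h1 := card_lt_split (m + n) (r + 1 + i) S hS (by omega) (by omega)
    have hX : nthSmallest S (r + 1) = r + 1 + i := by
      apply nthSmallest_eq _ _ _ (by omega) (by omega) hp
      omega
    rw [hX]
    omega

/-- Splitting a finite set of naturals at `p ∉ S` and `q ∈ S`. -/
theorem card_three_split (p q : ℕ) (S : Finset ℕ) (hpq : p < q) (hp : p ∉ S) (hq : q ∈ S) :
    (S.filter (· < q)).card = (S.filter (· < p)).card + (S.filter fun x => p < x ∧ x < q).card ∧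
    S.card = (S.filter (· < q)).card + (S.filter (q < ·)).card + 1 := by
  constructor
  · rw [← Finset.card_union_of_disjoint]
    · congr 1
      ext x
      simp only [Finset.mem_filter, Finset.mem_union]
      by_cases hx : x ∈ S
      · have : x ≠ p := fun e => hp (e ▸ hx)
        simp only [hx, true_and]
        omega
      · simp [hx]
    · rw [Finset.disjoint_left]
      intro x hx hx'
      simp only [Finset.mem_filter] at hx hx'
      omega
  · have h := card_gt_split q (S.erase q) (by simp)
    rw [Finset.card_erase_of_mem hq] at h
    have e1 : (S.erase q).filter (· < q) = S.filter (· < q) := by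
      ext x
      simp only [Finset.mem_filter, Finset.mem_erase]
      constructor
      · rintro ⟨⟨_, h⟩, h'⟩; exact ⟨h, h'⟩
      · rintro ⟨h, h'⟩; exact ⟨⟨by omega, h⟩, h'⟩
    have e2 : (S.erase q).filter (q < ·) = S.filter (q < ·) := by
      ext x
      simp only [Finset.mem_filter, Finset.mem_erase]
      constructor
      · rintro ⟨⟨_, h⟩, h'⟩; exact ⟨h, h'⟩
      · rintro ⟨h, h'⟩; exact ⟨⟨by omega, h⟩, h'⟩
    rw [e1, e2] at h
    have := Finset.card_pos.2 ⟨q, hq⟩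
    omega

theorem count_split (N p q a b c : ℕ) (h1 : 1 ≤ p) (hpq : p < q) (hqN : q ≤ N) :
    (((Finset.Icc 1 N).powersetCard (a + b + 1 + c)).filter (fun S =>
      (p ∉ S ∧ (S.filter (· < p)).card = a) ∧ (q ∈ S ∧ (S.filter (· < q)).card = a + b))).card
    = (p - 1).choose a * ((q - p - 1).choose b * (N - q).choose c) := by
  have hT : ((Finset.Ico 1 p).powersetCard a ×ˢ
      ((Finset.Ioo p q).powersetCard b ×ˢ (Finset.Ioc q N).powersetCard c)).card
      = (p - 1).choose a * ((q - p - 1).choose b * (N - q).choose c) := by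
    simp only [Finset.card_product, Finset.card_powersetCard, Nat.card_Ico, Nat.card_Ioo,
      Nat.card_Ioc]
  rw [← hT]
  have key : ∀ U V W : Finset ℕ, U ⊆ Finset.Ico 1 p → V ⊆ Finset.Ioo p q → W ⊆ Finset.Ioc q N →
      ((insert q (U ∪ V ∪ W)).filter (· < p) = U ∧
       (insert q (U ∪ V ∪ W)).filter (fun x => p < x ∧ x < q) = V ∧
       (insert q (U ∪ V ∪ W)).filter (q < ·) = W) ∧ p ∉ insert q (U ∪ V ∪ W) ∧
       insert q (U ∪ V ∪ W) ⊆ Finset.Icc 1 N := by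
    intro U V W hU hV hW
    have hU' : ∀ x ∈ U, 1 ≤ x ∧ x < p := fun x hx => Finset.mem_Ico.1 (hU hx)
    have hV' : ∀ x ∈ V, p < x ∧ x < q := fun x hx => Finset.mem_Ioo.1 (hV hx)
    have hW' : ∀ x ∈ W, q < x ∧ x ≤ N := fun x hx => Finset.mem_Ioc.1 (hW hx)
    refine ⟨⟨?_, ?_, ?_⟩, ?_, ?_⟩
    · ext x; grind
    · ext x; grind
    · ext x; grind
    · grind
    · intro x; grind
  apply Finset.card_nbij'
    (fun S => (S.filter (· < p), S.filter (fun x => p < x ∧ x < q), S.filter (q < ·)))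
    (fun t => insert q (t.1 ∪ t.2.1 ∪ t.2.2))
  · intro S hS
    simp only [Finset.coe_filter, Set.mem_ofPred_eq, Finset.mem_powersetCard] at hS
    obtain ⟨⟨hsub, hcard⟩, ⟨hp, ha⟩, hq, hb⟩ := hS
    obtain ⟨h3, h4⟩ := card_three_split p q S hpq hp hq
    simp only [Finset.mem_coe, Finset.mem_product, Finset.mem_powersetCard]
    refine ⟨⟨?_, ha⟩, ⟨?_, by omega⟩, ⟨?_, by omega⟩⟩
    all_goals
      intro x hx
      rw [Finset.mem_filter] at hx
      have := Finset.mem_Icc.1 (hsub hx.1)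
      simp only [Finset.mem_Ico, Finset.mem_Ioo, Finset.mem_Ioc]
      omega
  · rintro ⟨U, V, W⟩ ht
    simp only [Finset.mem_coe, Finset.mem_product, Finset.mem_powersetCard] at ht
    obtain ⟨⟨hU, hUc⟩, ⟨hV, hVc⟩, ⟨hW, hWc⟩⟩ := ht
    obtain ⟨⟨k1, k2, k3⟩, k4, k5⟩ := key U V W hU hV hW
    have hq : q ∈ insert q (U ∪ V ∪ W) := Finset.mem_insert_self _ _
    obtain ⟨h3, h4⟩ := card_three_split p q _ hpq k4 hq
    rw [k1, k2] at h3
    rw [k3] at h4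
    simp only [Finset.coe_filter, Set.mem_ofPred_eq, Finset.mem_powersetCard]
    refine ⟨⟨k5, by omega⟩, ⟨k4, by rw [k1]; exact hUc⟩, hq, by omega⟩
  · intro S hS
    simp only [Finset.coe_filter, Set.mem_ofPred_eq, Finset.mem_powersetCard] at hS
    obtain ⟨⟨hsub, hcard⟩, ⟨hp, ha⟩, hq, hb⟩ := hS
    ext x
    simp only [Finset.mem_insert, Finset.mem_union, Finset.mem_filter]
    by_cases hx : x ∈ S
    · have : x ≠ p := fun e => hp (e ▸ hx)
      simp only [hx, true_and, iff_true]
      omega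
    · have : x ≠ q := fun e => hx (e ▸ hq)
      simp [hx, this]
  · rintro ⟨U, V, W⟩ ht
    simp only [Finset.mem_coe, Finset.mem_product, Finset.mem_powersetCard] at ht
    obtain ⟨⟨hU, hUc⟩, ⟨hV, hVc⟩, ⟨hW, hWc⟩⟩ := ht
    obtain ⟨⟨k1, k2, k3⟩, k4, k5⟩ := key U V W hU hV hW
    simp only [k1, k2, k3]

/-- Second case of Theorem 1: the null joint distribution of `(A_s, B_r)` for a uniformly
random `n`-element subset of `{1,…,m+n}`, in the range `m-s ≤ i ≤ m`, `n-r ≤ k ≤ n`.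
Here `k+i-m-n+s+r` is written as `k+i+s+r - (m+n)` and `k-n+r` as `k+r-n` (both
nonnegative in this range). -/
theorem sidak_joint_null_case2 (m n s r i k : ℕ) (hs : s < m) (hr : r < n)
    (hi₁ : m - s ≤ i) (hi₂ : i ≤ m) (hk₁ : n - r ≤ k) (hk₂ : k ≤ n) :
    ((((Finset.Icc 1 (m + n)).powersetCard n).filter
        (fun S => Aexc m n s S = k ∧ Bprec m n r S = i)).card : ℚ)
        / ((m + n).choose n : ℚ)
      = ((m + n - r - i - 1).choose (n - r - 1) * (m + n - s - k - 1).choose (m - s - 1)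
            * ((k + i + s + r) - (m + n)).choose ((k + r) - n) : ℚ)
        / ((m + n).choose n : ℚ) := by
  have hcount : (((Finset.Icc 1 (m + n)).powersetCard n).filter
        (fun S => Aexc m n s S = k ∧ Bprec m n r S = i)).card
      = (m + n - r - i - 1).choose (n - r - 1) * (m + n - s - k - 1).choose (m - s - 1)
            * ((k + i + s + r) - (m + n)).choose ((k + r) - n) := by
    have hc := count_split (m + n) (m - s + n - k) (r + 1 + i) (n - k) (k + r - n) (n - r - 1)
      (by omega) (by omega) (by omega)
    rw [show n - k + (k + r - n) + 1 + (n - r - 1) = n by omega,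
      show n - k + (k + r - n) = r by omega] at hc
    have hf : ((Finset.Icc 1 (m + n)).powersetCard n).filter
        (fun S => Aexc m n s S = k ∧ Bprec m n r S = i)
        = ((Finset.Icc 1 (m + n)).powersetCard n).filter (fun S =>
          (m - s + n - k ∉ S ∧ (S.filter (· < m - s + n - k)).card = n - k) ∧
          (r + 1 + i ∈ S ∧ (S.filter (· < r + 1 + i)).card = r)) := by
      apply Finset.filter_congr
      intro S hS
      rw [Finset.mem_powersetCard] at hS
      rw [Aexc_iff m n s k S hS.1 hS.2 hs hk₂, Bprec_iff m n r i S hS.1 hS.2 hr hi₂]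
    rw [hf, hc, show m - s + n - k - 1 = m + n - s - k - 1 by omega,
      show r + 1 + i - (m - s + n - k) - 1 = k + i + s + r - (m + n) by omega,
      show m + n - (r + 1 + i) = m + n - r - i - 1 by omega,
      show (m + n - s - k - 1).choose (n - k) = (m + n - s - k - 1).choose (m - s - 1) from
        Nat.choose_symm_of_eq_add (by omega)]
    ring
  rw [hcount]
  push_cast
  rfl
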